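/- arXiv:1304.6232 — 8 statements merged into one kernel-verified Lean document; each statement's English description precedes it below -/
import Mathlib

section
/- Let N, m, and k ≥ 1 be natural numbers with N ≥ 1, C ≥ 1 a real number, Φ an m×N real matrix, and A : ℝ^m → ℝ^N a function such that for every x ∈ ℝ^N, ‖x − A(Φ x)‖₂ ≤ C · err_k(x). Then m ≥ N/C². -/
/-!
Since `0` is sparse, `A 0 = 0`, so every `η ∈ V = ker Φ` satisfies `‖η‖ ≤ C * errK N k η`. Deleting
a single coordinate of `η` shows `errK N k η ^ 2 ≤ ‖η‖ ^ 2 - η i ^ 2`, whence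
`C² η i ^ 2 ≤ (C² - 1) ‖η‖ ^ 2` for every `i`. Apply this to `η = P e_i`, with `P` the orthogonal
projection onto `V`: as `η i = ⟪P e_i, e_i⟫ = ‖P e_i‖ ^ 2`, the diagonal entry of `P` at `i` is at
most `1 - 1 / C²`. Summing over `i` gives `N - m ≤ dim V = tr P ≤ N (1 - 1 / C²)`.
-/

/-- A vector of `ℝ^N` is `k`-sparse if it has at most `k` nonzero coordinates. -/
def IsSparse (N k : ℕ) (y : EuclideanSpace ℝ (Fin N)) : Prop :=
  (Finset.univ.filter fun i => y i ≠ 0).card ≤ k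

/-- `errK N k x` is the best `k`-term approximation error of `x` in the `ℓ₂` norm:
the distance from `x` to the set of `k`-sparse vectors. -/
noncomputable def errK (N k : ℕ) (x : EuclideanSpace ℝ (Fin N)) : ℝ :=
  Metric.infDist x {y : EuclideanSpace ℝ (Fin N) | IsSparse N k y}

/-- Deleting the single coordinate `i` bounds the best `k`-term error when `k ≥ 1`. -/
lemma errK_sq_le {N k : ℕ} (hk : 1 ≤ k) (x : EuclideanSpace ℝ (Fin N)) (i : Fin N) :
    errK N k x ^ 2 ≤ ‖x‖ ^ 2 - x i ^ 2 := by
  have hs : IsSparse N k (EuclideanSpace.single i (x i)) := by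
    refine le_trans (Finset.card_le_one.2 ?_) hk
    intro a ha b hb
    simp only [Finset.mem_filter, Finset.mem_univ, true_and, PiLp.single_apply] at ha hb
    rw [(ite_ne_right_iff.1 ha).1, (ite_ne_right_iff.1 hb).1]
  have h1 : errK N k x ≤ ‖x - EuclideanSpace.single i (x i)‖ := by
    rw [← dist_eq_norm]
    exact Metric.infDist_le_dist_of_mem hs
  have h0 : 0 ≤ errK N k x := Metric.infDist_nonneg
  have h2 : ‖x - EuclideanSpace.single i (x i)‖ ^ 2 = ‖x‖ ^ 2 - x i ^ 2 := by
    rw [norm_sub_sq_real, EuclideanSpace.inner_single_right]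
    simp
    ring
  rw [← h2]
  gcongr

/-- A subspace on which every coordinate satisfies `c * η i ^ 2 ≤ (c - 1) * ‖η‖ ^ 2` has
dimension `d` with `c * d ≤ (c - 1) * N`: the trace of its orthogonal projection is `d`. -/
lemma finrank_le_of_coord_le {N : ℕ} (V : Submodule ℝ (EuclideanSpace ℝ (Fin N))) {c : ℝ}
    (hc : 1 ≤ c) (h : ∀ η ∈ V, ∀ i, c * η i ^ 2 ≤ (c - 1) * ‖η‖ ^ 2) :
    c * (Module.finrank ℝ V : ℝ) ≤ (c - 1) * N := by
  have htr : (Module.finrank ℝ V : ℝ) =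
      ∑ i : Fin N, V.starProjection (EuclideanSpace.single i 1) i := by
    have hp : LinearMap.IsProj V (V.starProjection : EuclideanSpace ℝ (Fin N) →ₗ[ℝ] _) :=
      ⟨fun x => V.starProjection_apply_mem x, fun x hx => V.starProjection_eq_self_iff.2 hx⟩
    rw [← hp.trace, LinearMap.trace_eq_sum_inner _ (EuclideanSpace.basisFun (Fin N) ℝ)]
    simp [EuclideanSpace.inner_single_left]
  have hdiag : ∀ i : Fin N, c * V.starProjection (EuclideanSpace.single i 1) i ≤ c - 1 := by
    intro i
    set η := V.starProjection (EuclideanSpace.single i (1 : ℝ)) with hη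
    have hn : ‖η‖ ^ 2 = η i := by
      have h1 : inner ℝ η η = inner ℝ η (EuclideanSpace.single i (1 : ℝ)) := by
        conv_lhs => rw [hη, V.inner_starProjection_left_eq_right,
          V.starProjection_eq_self_iff.2 (hη ▸ V.starProjection_apply_mem _)]
        exact real_inner_comm _ _
      rw [← real_inner_self_eq_norm_sq, h1, EuclideanSpace.inner_single_right]
      simp
    have h2 := h η (V.starProjection_apply_mem _) i
    rw [hn] at h2
    have h3 : 0 ≤ η i := hn ▸ sq_nonneg ‖η‖
    rcases h3.eq_or_lt with h4 | h4
    · rw [← h4]; linarith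
    · nlinarith
  rw [htr, Finset.mul_sum]
  calc _ ≤ ∑ _i : Fin N, (c - 1) := Finset.sum_le_sum fun i _ => hdiag i
    _ = (c - 1) * N := by
      rw [Finset.sum_const, Finset.card_univ, Fintype.card_fin, nsmul_eq_mul, mul_comm]

/-- Cohen–Dahmen–DeVore. Any `ℓ₂/ℓ₂` "forall" sparse recovery
scheme `(Φ, A)` with approximation factor `C` must satisfy `m ≥ N / C²`. -/
theorem stmt_5 (N m k : ℕ) (hN : 1 ≤ N) (hk : 1 ≤ k) (C : ℝ) (hC : 1 ≤ C)
    (Φ : Matrix (Fin m) (Fin N) ℝ)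
    (A : EuclideanSpace ℝ (Fin m) → EuclideanSpace ℝ (Fin N))
    (h : ∀ x : EuclideanSpace ℝ (Fin N),
      ‖x - A (Matrix.toEuclideanLin Φ x)‖ ≤ C * errK N k x) :
    (N : ℝ) / C ^ 2 ≤ (m : ℝ) := by
  have herr : errK N k 0 = 0 := Metric.infDist_zero_of_mem (by simp [IsSparse])
  have hA : A 0 = 0 := by simpa [herr] using h 0
  have hc : 1 ≤ C ^ 2 := one_le_pow₀ hC
  have hker := finrank_le_of_coord_le (LinearMap.ker (Matrix.toEuclideanLin Φ)) hc (by
    intro η hη i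
    have h1 : ‖η‖ ≤ C * errK N k η := by
      simpa [LinearMap.mem_ker.1 hη, hA] using h η
    have h2 : ‖η‖ ^ 2 ≤ C ^ 2 * errK N k η ^ 2 := by
      rw [← mul_pow]; gcongr
    have h3 := mul_le_mul_of_nonneg_left (errK_sq_le hk η i) (sq_nonneg C)
    linarith)
  have hrn := (Matrix.toEuclideanLin Φ).finrank_range_add_finrank_ker
  have hr := Submodule.finrank_le (LinearMap.range (Matrix.toEuclideanLin Φ))
  rw [finrank_euclideanSpace_fin] at hrn hr
  have hdim : (N : ℝ) ≤ m + Module.finrank ℝ (LinearMap.ker (Matrix.toEuclideanLin Φ)) := by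
    exact_mod_cast (by omega)
  rw [div_le_iff₀ (by positivity)]
  nlinarith
end

section
/- Let G : [N]×[ℓ] → [M] be a (2t, ε)-expander with t ≥ 1 and ε ≥ 0 real. Let S, T ⊆ [N] be disjoint subsets with |T| = t and |S| ≥ t. Then |Γ(S) ∩ Γ(T)| ≤ |{(i, j) ∈ T×[ℓ] : G(i, j) ∈ Γ(S)}| ≤ 4 · |S| · ℓ · ε. -/
/-!
The first inequality holds because every vertex of `Γ(S) ∩ Γ(T)` is the endpoint of at least one
of the counted edges.

For the second, suppose first that `|S| ≤ t`. Then `S ∪ T` has size at most `2t`, so it has at least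
`(1 - ε)(|S| + t)ℓ` neighbors, of which at most `|S|ℓ` lie in `Γ(S)`. Hence at least
`tℓ - ε(|S| + t)ℓ` of the `tℓ` edges of `T` miss `Γ(S)`, and at most `ε(|S| + t)ℓ` land in it
(`card_edgesInto_le_of_card_le`). In general, cut `S` into blocks of size `t` and a remainder of
size at most `t`; every block contributes at most `2tℓε` edges, and this adds up to
`2ℓε(|S| + t)` (`card_edgesInto_le`), which is at most `4|S|ℓε` when `t ≤ |S|`.
-/

/-- The set of right-neighbors `Γ(S)` of a set `S` of left vertices in the bipartite
graph `G : [N] × [ℓ] → [M]`. -/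
def nbhd {N ℓ M : ℕ} (G : Fin N → Fin ℓ → Fin M) (S : Finset (Fin N)) : Finset (Fin M) :=
  S.biUnion fun i => Finset.image (G i) Finset.univ

/-- `G` is a `(t, ε)`-expander: every left set `S` of size at most `t` has at least
`(1 - ε)·|S|·ℓ` right-neighbors. -/
def IsExpander {N ℓ M : ℕ} (t : ℕ) (ε : ℝ) (G : Fin N → Fin ℓ → Fin M) : Prop :=
  ∀ S : Finset (Fin N), S.card ≤ t →
    (1 - ε) * (S.card : ℝ) * (ℓ : ℝ) ≤ ((nbhd G S).card : ℝ)

/-- The edges of `T`, as pairs (left vertex, edge label), that land in `Γ(S)`. -/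
def edgesInto {N ℓ M : ℕ} (G : Fin N → Fin ℓ → Fin M) (S T : Finset (Fin N)) :
    Finset (Fin N × Fin ℓ) :=
  (T ×ˢ (Finset.univ : Finset (Fin ℓ))).filter fun p => G p.1 p.2 ∈ nbhd G S

theorem mem_nbhd {N ℓ M : ℕ} {G : Fin N → Fin ℓ → Fin M} {S : Finset (Fin N)} {y : Fin M} :
    y ∈ nbhd G S ↔ ∃ i ∈ S, ∃ j, G i j = y := by
  simp [nbhd]

theorem nbhd_union {N ℓ M : ℕ} (G : Fin N → Fin ℓ → Fin M) (A B : Finset (Fin N)) :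
    nbhd G (A ∪ B) = nbhd G A ∪ nbhd G B :=
  Finset.union_biUnion

theorem card_nbhd_le {N ℓ M : ℕ} (G : Fin N → Fin ℓ → Fin M) (S : Finset (Fin N)) :
    (nbhd G S).card ≤ S.card * ℓ :=
  Finset.card_biUnion_le_card_mul _ _ _ fun _ _ => Finset.card_image_le.trans (by simp)

theorem edgesInto_union {N ℓ M : ℕ} (G : Fin N → Fin ℓ → Fin M) (A B T : Finset (Fin N)) :
    edgesInto G (A ∪ B) T = edgesInto G A T ∪ edgesInto G B T := by
  simp only [edgesInto, nbhd_union, Finset.mem_union, Finset.filter_or]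

/-- Each neighbor of `S ∪ T` outside `Γ(S)` uses up an edge of `T` that does not land in `Γ(S)`. -/
theorem card_nbhd_union_add_card_edgesInto_le {N ℓ M : ℕ} (G : Fin N → Fin ℓ → Fin M)
    (S T : Finset (Fin N)) :
    (nbhd G (S ∪ T)).card + (edgesInto G S T).card ≤ S.card * ℓ + T.card * ℓ := by
  have hsub : nbhd G (S ∪ T) ⊆ nbhd G S ∪
      ((T ×ˢ (Finset.univ : Finset (Fin ℓ))).filter fun p => ¬ G p.1 p.2 ∈ nbhd G S).image
        fun p => G p.1 p.2 := by
    intro y hy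
    by_cases hyS : y ∈ nbhd G S
    · exact Finset.mem_union_left _ hyS
    · rw [nbhd_union, Finset.mem_union] at hy
      obtain ⟨i, hi, j, rfl⟩ := mem_nbhd.1 (hy.resolve_left hyS)
      exact Finset.mem_union_right _ (Finset.mem_image.2 ⟨(i, j), by simp [hi, hyS], rfl⟩)
  have h1 := (Finset.card_le_card hsub).trans (Finset.card_union_le _ _)
  have h2 := Finset.card_image_le (f := fun p : Fin N × Fin ℓ => G p.1 p.2)
    (s := (T ×ˢ (Finset.univ : Finset (Fin ℓ))).filter fun p => ¬ G p.1 p.2 ∈ nbhd G S)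
  have h3 := Finset.card_filter_add_card_filter_not (s := T ×ˢ (Finset.univ : Finset (Fin ℓ)))
    fun p => G p.1 p.2 ∈ nbhd G S
  have h4 := card_nbhd_le G S
  simp only [Finset.card_product, Finset.card_univ, Fintype.card_fin] at h3
  unfold edgesInto
  omega

theorem card_edgesInto_le_of_card_le {N ℓ M t : ℕ} {ε : ℝ} {G : Fin N → Fin ℓ → Fin M}
    (hG : IsExpander (2 * t) ε G) {S T : Finset (Fin N)} (hdisj : Disjoint S T)
    (hT : T.card = t) (hS : S.card ≤ t) :
    ((edgesInto G S T).card : ℝ) ≤ ε * (S.card + t) * ℓ := by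
  have hcard : (S ∪ T).card = S.card + t := by rw [Finset.card_union_of_disjoint hdisj, hT]
  have h1 := hG (S ∪ T) (by omega)
  have h2 : ((nbhd G (S ∪ T)).card : ℝ) + (edgesInto G S T).card ≤ S.card * ℓ + T.card * ℓ :=
    mod_cast card_nbhd_union_add_card_edgesInto_le G S T
  rw [hcard] at h1
  rw [hT] at h2
  push_cast at h1
  linarith

/-- The bound for `S` of arbitrary size, by splitting off blocks of size `t`. The extra summand
`t` pays for the last, possibly incomplete, block. -/
theorem card_edgesInto_le {N ℓ M t : ℕ} (ht : 1 ≤ t) {ε : ℝ} (hε : 0 ≤ ε)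
    {G : Fin N → Fin ℓ → Fin M} (hG : IsExpander (2 * t) ε G) {T : Finset (Fin N)}
    (hT : T.card = t) (S : Finset (Fin N)) (hdisj : Disjoint S T) :
    ((edgesInto G S T).card : ℝ) ≤ 2 * ε * (S.card + t) * ℓ := by
  induction S using Finset.strongInduction with
  | H S ih =>
    rcases le_or_gt S.card t with hS | hS
    · have h1 := card_edgesInto_le_of_card_le hG hdisj hT hS
      have h2 : 0 ≤ ε * (S.card + t) * ℓ := by positivity
      linarith
    · obtain ⟨A, hAS, hA⟩ := Finset.exists_subset_card_eq hS.le
      have hAne : A.Nonempty := Finset.card_pos.1 (by omega)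
      have h1 := card_edgesInto_le_of_card_le hG (hdisj.mono_left hAS) hT hA.le
      have h2 := ih (S \ A) (Finset.sdiff_ssubset hAS hAne) (hdisj.mono_left Finset.sdiff_subset)
      have h3 : ((edgesInto G S T).card : ℝ) ≤
          (edgesInto G A T).card + (edgesInto G (S \ A) T).card := by
        have h := Finset.card_union_le (edgesInto G A T) (edgesInto G (S \ A) T)
        rw [← edgesInto_union, Finset.union_sdiff_of_subset hAS] at h
        exact_mod_cast h
      have h4 : ((S \ A).card : ℝ) + t = S.card := by
        have h := Finset.card_sdiff_add_card_eq_card hAS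
        rw [hA] at h
        exact_mod_cast h
      rw [hA] at h1
      rw [h4] at h2
      linarith

/-- For a `(2t, ε)`-expander `G` and disjoint `S, T ⊆ [N]` with
`|T| = t ≤ |S|`, we have `|Γ(S) ∩ Γ(T)| ≤ |{(i,j) ∈ T×[ℓ] : G(i,j) ∈ Γ(S)}| ≤ 4|S|ℓε`. -/
theorem stmt_7 {N ℓ M : ℕ} (t : ℕ) (ht : 1 ≤ t) (ε : ℝ) (hε : 0 ≤ ε)
    (G : Fin N → Fin ℓ → Fin M) (hG : IsExpander (2 * t) ε G)
    (S T : Finset (Fin N)) (hdisj : Disjoint S T) (hT : T.card = t) (hS : t ≤ S.card) :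
    ((nbhd G S ∩ nbhd G T).card : ℝ)
        ≤ (((T ×ˢ (Finset.univ : Finset (Fin ℓ))).filter
            fun p => G p.1 p.2 ∈ nbhd G S).card : ℝ) ∧
    (((T ×ˢ (Finset.univ : Finset (Fin ℓ))).filter
            fun p => G p.1 p.2 ∈ nbhd G S).card : ℝ)
        ≤ 4 * (S.card : ℝ) * (ℓ : ℝ) * ε := by
  constructor
  · have hsub : nbhd G S ∩ nbhd G T ⊆ (edgesInto G S T).image fun p => G p.1 p.2 := by
      intro y hy
      obtain ⟨hyS, hyT⟩ := Finset.mem_inter.1 hy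
      obtain ⟨i, hi, j, rfl⟩ := mem_nbhd.1 hyT
      exact Finset.mem_image.2 ⟨(i, j), by simp [edgesInto, hi, hyS], rfl⟩
    exact_mod_cast (Finset.card_le_card hsub).trans Finset.card_image_le
  · have h1 := card_edgesInto_le ht hε hG hT S hdisj
    have h2 : (t : ℝ) ≤ S.card := mod_cast hS
    have h3 : 2 * ε * (S.card + t) * ℓ ≤ 2 * ε * ((S.card : ℝ) + S.card) * ℓ := by gcongr
    refine h1.trans (h3.trans_eq ?_)
    ring
end

section
/- Let d ≥ 2 be an integer and Σ a type. For each i ∈ {1,…,d}, let S̄_i be a finite set of functions from {1,…,d}∖{i} to Σ, with |S̄_i| = k_i. Let S be the set of all vectors v : {1,…,d} → Σ such that for every i ∈ {1,…,d}, the restriction v|_{{1,…,d}∖{i}} belongs to S̄_i. Then S is finite and |S| ≤ (d−1) · (∏_{i=1}^d k_i)^{1/(d−1)}. -/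
/-!
The bound holds even without the factor `d - 1`: with `d = n + 1`, a nonempty finite set `F` of
vectors whose projections lie in sets `T i` satisfies `|F| ^ n ≤ ∏ i, |T i|`
(`loomisWhitney_card_pow_le`). This is proved by induction on `n`, cutting `F` along coordinate `0`.
Each slice `F_t` embeds in `T 0`, and its own projections lie in the slices of the `T i.succ`, so
the induction hypothesis gives `|F_t| ^ (n + 1) ≤ |T 0| * ∏ i, |(T i.succ)_t|`. Summing over `t` with
Hölder's inequality (`sum_pow_le_mul_prod_sum`) gives the bound for `F`. The set in the theorem is
finite because a vector is determined by any two of its projections.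
-/

open Finset in
/-- Hölder's inequality for a product of `|ι|` functions, in a form that avoids roots: a bound on
`x t ^ |ι|` by a product of functions of `t` sums to the product of their sums. -/
theorem sum_pow_le_mul_prod_sum {ι τ : Type*} [Fintype ι] [Nonempty ι] (s : Finset τ)
    (x : τ → ℝ) (a : ι → τ → ℝ) (K : ℝ) (hx : ∀ t ∈ s, 0 ≤ x t)
    (ha : ∀ i, ∀ t ∈ s, 0 ≤ a i t) (hK : 0 ≤ K)
    (h : ∀ t ∈ s, x t ^ Fintype.card ι ≤ K * ∏ i, a i t) :
    (∑ t ∈ s, x t) ^ Fintype.card ι ≤ K * ∏ i, ∑ t ∈ s, a i t := by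
  set m := Fintype.card ι with hm
  have hm0 : m ≠ 0 := Fintype.card_ne_zero
  have hmR : (m : ℝ) ≠ 0 := by exact_mod_cast hm0
  have hA : ∀ i, 0 ≤ ∑ t ∈ s, a i t := fun i => sum_nonneg (ha i)
  by_cases h0 : ∃ i, ∑ t ∈ s, a i t = 0
  · obtain ⟨i, hi⟩ := h0
    have hz : ∀ t ∈ s, x t = 0 := by
      intro t ht
      have h1 : a i t = 0 := (sum_eq_zero_iff_of_nonneg (ha i)).1 hi t ht
      have h2 := h t ht
      rw [prod_eq_zero (mem_univ i) h1, mul_zero] at h2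
      exact pow_eq_zero_iff hm0 |>.1 (le_antisymm h2 (pow_nonneg (hx t ht) _))
    rw [sum_eq_zero hz, zero_pow hm0]
    exact mul_nonneg hK (prod_nonneg fun i _ => hA i)
  push Not at h0
  have hApos : ∀ i, 0 < ∑ t ∈ s, a i t := fun i => lt_of_le_of_ne (hA i) (Ne.symm (h0 i))
  set P := K * ∏ i, ∑ t ∈ s, a i t with hP
  have hP0 : 0 ≤ P := mul_nonneg hK (prod_nonneg fun i _ => hA i)
  set C := P ^ ((m : ℝ)⁻¹) with hC
  have hC0 : 0 ≤ C := Real.rpow_nonneg hP0 _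
  have hCm : C ^ m = P := Real.rpow_inv_natCast_pow hP0 hm0
  -- Normalize each factor to have sum `1`, then bound the geometric mean by the arithmetic mean.
  have key : ∀ t ∈ s, x t ≤ C * ∑ i, (m : ℝ)⁻¹ * (a i t / ∑ t ∈ s, a i t) := by
    intro t ht
    have hz : ∀ i ∈ (univ : Finset ι), 0 ≤ a i t / ∑ t ∈ s, a i t :=
      fun i _ => div_nonneg (ha i t ht) (hA i)
    have amgm := Real.geom_mean_le_arith_mean_weighted univ (fun _ : ι => (m : ℝ)⁻¹)
      (fun i => a i t / ∑ t ∈ s, a i t) (fun _ _ => by positivity)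
      (by simp [← hm, hmR]) hz
    refine le_trans ?_ (mul_le_mul_of_nonneg_left amgm hC0)
    rw [Real.finsetProd_rpow _ _ hz]
    refine le_of_pow_le_pow_left₀ hm0 (mul_nonneg hC0 (Real.rpow_nonneg (prod_nonneg hz) _)) ?_
    rw [mul_pow, hCm, Real.rpow_inv_natCast_pow (prod_nonneg hz) hm0, hP, mul_assoc,
      ← prod_mul_distrib]
    refine (h t ht).trans (le_of_eq ?_)
    congr 1
    exact prod_congr rfl fun i _ => (mul_div_cancel₀ _ (h0 i)).symm
  have hsum : ∑ t ∈ s, x t ≤ C := by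
    refine (sum_le_sum key).trans (le_of_eq ?_)
    rw [← mul_sum, sum_comm]
    simp_rw [← mul_sum, ← sum_div, div_self (h0 _)]
    simp [← hm, hmR]
  calc (∑ t ∈ s, x t) ^ m ≤ C ^ m := pow_le_pow_left₀ (sum_nonneg hx) hsum m
    _ = P := hCm

open Finset in
/-- The Loomis–Whitney inequality for a finite set of vectors. Nonemptiness is needed for `n = 0`,
where the left side is `1` even if `F` is empty. -/
theorem loomisWhitney_card_pow_le {σ : Type*} (n : ℕ) (F : Finset (Fin (n + 1) → σ))
    (T : Fin (n + 1) → Finset (Fin n → σ)) (hF : F.Nonempty)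
    (h : ∀ v ∈ F, ∀ i, i.removeNth v ∈ T i) :
    F.card ^ n ≤ ∏ i, (T i).card := by
  classical
  induction n with
  | zero =>
    obtain ⟨v, hv⟩ := hF
    simpa using Nat.one_le_iff_ne_zero.2 (card_ne_zero_of_mem (h v hv 0))
  | succ n ih =>
    have inj : ∀ t : σ, ∀ N : ℕ, Set.InjOn (fun v : Fin (N + 1) → σ => Fin.tail v)
        {v | v 0 = t} := by
      intro t N v hv w hw hvw
      rw [← Fin.cons_self_tail v, ← Fin.cons_self_tail w]
      simp only [Set.mem_ofPred_eq] at hv hw hvw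
      rw [hv, hw, hvw]
    have step : ∀ t ∈ F.image (fun v => v 0),
        #{v ∈ F | v 0 = t} ^ (n + 1) ≤ #(T 0) * ∏ i : Fin (n + 1), #{u ∈ T i.succ | u 0 = t} := by
      intro t ht
      obtain ⟨v, hv, rfl⟩ := mem_image.1 ht
      set G := {w ∈ F | w 0 = v 0} with hG
      have hcard : #(G.image (Fin.tail (α := fun _ => σ))) = #G :=
        card_image_of_injOn ((inj (v 0) _).mono fun w hw => (mem_filter.1 hw).2)
      have h0 : #(G.image (Fin.tail (α := fun _ => σ))) ≤ #(T 0) := by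
        refine card_le_card fun w hw => ?_
        obtain ⟨u, hu, rfl⟩ := mem_image.1 hw
        simpa using h u (mem_filter.1 hu).1 0
      have hGne : G.Nonempty := ⟨v, by rw [hG, mem_filter]; exact ⟨hv, rfl⟩⟩
      have h1 := ih (G.image (Fin.tail (α := fun _ => σ)))
        (fun i => ({u ∈ T i.succ | u 0 = v 0} : Finset (Fin (n + 1) → σ)).image (Fin.tail (α := fun _ => σ)))
        (hGne.image _) (by
          intro w hw i
          obtain ⟨u, hu, rfl⟩ := mem_image.1 hw
          obtain ⟨huF, hu0⟩ := mem_filter.1 hu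
          refine mem_image.2 ⟨i.succ.removeNth u, mem_filter.2 ⟨h u huF _, ?_⟩, ?_⟩
          · simpa [Fin.removeNth] using hu0
          · ext j
            simp [Fin.removeNth, Fin.tail])
      rw [hcard] at h0 h1
      rw [pow_succ']
      exact Nat.mul_le_mul h0 (h1.trans (prod_le_prod' fun i _ => card_image_le))
    have hF' : #F = ∑ t ∈ F.image (fun v => v 0), #{v ∈ F | v 0 = t} :=
      card_eq_sum_card_image _ _
    have hT : ∀ i : Fin (n + 1),
        ∑ t ∈ F.image (fun v => v 0), #{u ∈ T i.succ | u 0 = t} ≤ #(T i.succ) := fun i =>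
      (sum_card_fiberwise_eq_card_filter _ _ _).trans_le (card_filter_le _ _)
    have hol := sum_pow_le_mul_prod_sum (ι := Fin (n + 1)) (F.image fun v => v 0)
      (fun t => (#{v ∈ F | v 0 = t} : ℝ)) (fun i t => (#{u ∈ T i.succ | u 0 = t} : ℝ))
      (#(T 0) : ℝ) (fun _ _ => by positivity) (fun _ _ _ => by positivity) (by positivity)
      (fun t ht => by rw [Fintype.card_fin]; exact_mod_cast step t ht)
    rw [Fintype.card_fin] at hol
    norm_cast at hol
    rw [← hF'] at hol
    rw [Fin.prod_univ_succ]
    exact hol.trans (Nat.mul_le_mul_left _ (prod_le_prod' fun i _ => hT i))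

/-- constructive Loomis–Whitney, projections of size `d-1`.
If for each `i ∈ [d]` the projection of every vector in `S` onto the coordinates
`[d] \ {i}` lies in a given finite set `S̄_i` of size `k_i`, then `S` is finite and
`|S| ≤ (d-1) · (∏ᵢ k_i)^{1/(d-1)}`. -/
theorem stmt_10 (d : ℕ) (hd : 2 ≤ d) (σ : Type)
    (Sbar : ∀ i : Fin d, Finset ({j : Fin d // j ≠ i} → σ))
    (k : Fin d → ℕ) (hk : ∀ i, (Sbar i).card = k i) :
    Set.Finite {v : Fin d → σ |
        ∀ i : Fin d, (fun j : {j : Fin d // j ≠ i} => v j) ∈ Sbar i} ∧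
    (Nat.card {v : Fin d → σ |
        ∀ i : Fin d, (fun j : {j : Fin d // j ≠ i} => v j) ∈ Sbar i} : ℝ)
      ≤ ((d : ℝ) - 1) * (((∏ i, k i : ℕ) : ℝ) ^ (((d : ℝ) - 1)⁻¹)) := by
  classical
  set S : Set (Fin d → σ) :=
    {v | ∀ i : Fin d, (fun j : {j : Fin d // j ≠ i} => v j) ∈ Sbar i} with hS
  obtain ⟨n, rfl⟩ : ∃ n, d = n + 1 := ⟨d - 1, by omega⟩
  have hn : 1 ≤ n := by omega
  have hfin : S.Finite := by
    let i₀ : Fin (n + 1) := ⟨0, by omega⟩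
    let i₁ : Fin (n + 1) := ⟨1, by omega⟩
    have h01 : i₀ ≠ i₁ := by simp [i₀, i₁]
    refine Set.Finite.of_injOn
      (f := fun v => ((fun j : {j // j ≠ i₀} => v j), (fun j : {j // j ≠ i₁} => v j)))
      (t := ((Sbar i₀ ×ˢ Sbar i₁ : Finset _) : Set _)) ?_ ?_ (Finset.finite_toSet _)
    · intro v hv
      exact Finset.mem_coe.2 (Finset.mem_product.2 ⟨hv i₀, hv i₁⟩)
    · intro v _ w _ hvw
      obtain ⟨h0, h1⟩ := Prod.mk.inj hvw
      funext j
      by_cases hj : j = i₀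
      · exact congrFun h1 ⟨j, hj ▸ h01⟩
      · exact congrFun h0 ⟨j, hj⟩
  refine ⟨hfin, ?_⟩
  set R : ℝ := ((∏ i, k i : ℕ) : ℝ) ^ ((((n + 1 : ℕ) : ℝ) - 1)⁻¹) with hR
  have hR0 : 0 ≤ R := Real.rpow_nonneg (Nat.cast_nonneg _) _
  have hcast : ((n + 1 : ℕ) : ℝ) - 1 = n := by push_cast; ring
  have hn' : (1 : ℝ) ≤ n := by exact_mod_cast hn
  suffices hle : (Nat.card S : ℝ) ≤ R by
    rw [hcast]
    exact hle.trans (le_mul_of_one_le_left hR0 hn')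
  have hncard : Nat.card S = hfin.toFinset.card := by
    rw [Nat.card_coe_set_eq, Set.ncard_eq_toFinset_card S hfin]
  rw [hncard]
  rcases hfin.toFinset.eq_empty_or_nonempty with he | hne
  · rw [he]
    simpa using hR0
  -- `Fin.succAbove i` identifies `Fin n` with the indices different from `i`.
  have hLW := loomisWhitney_card_pow_le n hfin.toFinset
    (fun i => (Sbar i).image fun u j => u ⟨i.succAbove j, Fin.succAbove_ne i j⟩) hne (by
      intro v hv i
      exact Finset.mem_image.2 ⟨_, (hfin.mem_toFinset.1 hv) i, rfl⟩)
  have hk' : hfin.toFinset.card ^ n ≤ ∏ i, k i :=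
    hLW.trans (Finset.prod_le_prod' fun i _ => Finset.card_image_le.trans (hk i).le)
  have hn0 : n ≠ 0 := by omega
  refine le_of_pow_le_pow_left₀ hn0 hR0 ?_
  rw [hR, hcast, Real.rpow_inv_natCast_pow (Nat.cast_nonneg _) hn0]
  exact_mod_cast hk'
end

section
/- Let d ≥ 2 and 0 ≤ e ≤ d−2 be integers and Σ a type. For each i ∈ {1,…,d}, let S̄_i be a finite set of functions from {1,…,d}∖{i} to Σ, with |S̄_i| = k_i where each k_i ≥ 1. Let S be the set of all vectors v : {1,…,d} → Σ such that v|_{{1,…,d}∖{i}} ∈ S̄_i holds for at least d − e indices i ∈ {1,…,d}. Then S is finite and |S| ≤ ∑_{i=0}^{e} ∑_{B ⊆ {1,…,d}, |B| = i} (d − i − 1) · (∏_{j ∈ {1,…,d}∖B} k_j)^{1/(d−i−1)}. -/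
/-!
Sort the vectors `v ∈ S` by the set `B` of indices at which the projection of `v` fails to lie in
`S̄_i`; only sets with `|B| ≤ e` occur. On the class of `B` all projections deleting an index
outside `B` are good, so the estimate follows from a Loomis–Whitney inequality that deletes
only the indices of a given set `G` (here the complement of `B`): for a nonempty finite set `T`
of vectors, `|T| ^ (|G| - 1) ≤ ∏_{j ∈ G} |π_j T|` (`card_pow_le_prod_card_proj`). This is proved
by induction on `G`, slicing `T` along the newly added coordinate and combining the slices by
Hölder's inequality with equal exponents (`sum_pow_le_mul_prod_sum`). This class bound is
`(∏ k_j) ^ (1 / (d - i - 1))`, and the factor `d - i - 1 ≥ 1` of the claim is slack. Finiteness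
holds because a vector is determined by two of its projections.
-/

/-- The projection of a vector obtained by deleting the coordinate `i`. -/
def delProj {ι σ : Type*} (i : ι) (v : ι → σ) : {j : ι // j ≠ i} → σ := fun j => v j

/-- Hölder's inequality for a product of `|J|` functions with all exponents equal to `|J|`,
in power form. -/
lemma sum_pow_le_mul_prod_sum_s11 {α β : Type*} (X : Finset α) (J : Finset β) (hJ : J.Nonempty)
    (a : α → ℝ) (f : β → α → ℝ) (C : ℝ) (ha : ∀ x ∈ X, 0 ≤ a x) (hC : 0 ≤ C)
    (hf : ∀ j ∈ J, ∀ x ∈ X, 0 ≤ f j x) (hF : ∀ j ∈ J, 0 < ∑ x ∈ X, f j x)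
    (h : ∀ x ∈ X, a x ^ J.card ≤ C * ∏ j ∈ J, f j x) :
    (∑ x ∈ X, a x) ^ J.card ≤ C * ∏ j ∈ J, ∑ x ∈ X, f j x := by
  have hn : J.card ≠ 0 := hJ.card_pos.ne'
  have hnR : (0 : ℝ) < J.card := by exact_mod_cast hJ.card_pos
  set n := J.card with hndef
  set P := ∏ j ∈ J, ∑ x ∈ X, f j x with hP
  have hPpos : 0 < P := Finset.prod_pos hF
  have hCP : 0 ≤ C * P := mul_nonneg hC hPpos.le
  -- After normalising each `f j` to total mass one, AM-GM bounds every term.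
  have key : ∀ x ∈ X, a x ≤ (C * P) ^ ((n : ℝ)⁻¹) *
      ∑ j ∈ J, (n : ℝ)⁻¹ * (f j x / ∑ y ∈ X, f j y) := by
    intro x hx
    have hq : ∀ j ∈ J, 0 ≤ f j x / ∑ y ∈ X, f j y := fun j hj =>
      div_nonneg (hf j hj x hx) (hF j hj).le
    have h1 : a x ^ n ≤ (C * P) * ∏ j ∈ J, (f j x / ∑ y ∈ X, f j y) := by
      rw [Finset.prod_div_distrib, ← hP, mul_assoc, mul_div_cancel₀ _ hPpos.ne']
      exact h x hx
    have h2 : a x ≤ ((C * P) * ∏ j ∈ J, (f j x / ∑ y ∈ X, f j y)) ^ ((n : ℝ)⁻¹) := by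
      rw [← Real.pow_rpow_inv_natCast (ha x hx) hn]
      exact Real.rpow_le_rpow (pow_nonneg (ha x hx) _) h1 (by positivity)
    refine h2.trans ?_
    rw [Real.mul_rpow hCP (Finset.prod_nonneg hq)]
    refine mul_le_mul_of_nonneg_left ?_ (Real.rpow_nonneg hCP _)
    rw [← Real.finsetProd_rpow _ _ hq]
    refine Real.geom_mean_le_arith_mean_weighted J (fun _ => (n : ℝ)⁻¹) _
      (fun _ _ => by positivity) ?_ hq
    rw [Finset.sum_const, nsmul_eq_mul, ← hndef, mul_inv_cancel₀ hnR.ne']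
  have hsum : ∑ x ∈ X, a x ≤ (C * P) ^ ((n : ℝ)⁻¹) := by
    refine (Finset.sum_le_sum key).trans (le_of_eq ?_)
    rw [← Finset.mul_sum, Finset.sum_comm]
    have : ∀ j ∈ J, ∑ x ∈ X, (n : ℝ)⁻¹ * (f j x / ∑ y ∈ X, f j y) = (n : ℝ)⁻¹ := by
      intro j hj
      rw [← Finset.mul_sum, ← Finset.sum_div, div_self (hF j hj).ne', mul_one]
    rw [Finset.sum_congr rfl this, Finset.sum_const, nsmul_eq_mul, ← hndef,
      mul_inv_cancel₀ hnR.ne', mul_one]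
  calc (∑ x ∈ X, a x) ^ n ≤ ((C * P) ^ ((n : ℝ)⁻¹)) ^ n :=
        pow_le_pow_left₀ (Finset.sum_nonneg ha) hsum n
    _ = C * P := Real.rpow_inv_natCast_pow hCP hn

/-- Slicing along a coordinate `a ≠ j` commutes with deleting the coordinate `j`. -/
lemma card_image_delProj_eq_sum {ι σ : Type*} [Fintype ι] [DecidableEq ι] [DecidableEq σ]
    (T : Finset (ι → σ)) {a j : ι} (haj : a ≠ j) :
    (T.image (delProj j)).card =
      ∑ x ∈ T.image (fun v => v a), ((T.filter fun v => v a = x).image (delProj j)).card := by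
  rw [Finset.card_eq_sum_card_fiberwise (f := fun w => w ⟨a, haj⟩)
    (t := T.image (fun v => v a))]
  · refine Finset.sum_congr rfl fun x _ => ?_
    rw [Finset.filter_image]
    rfl
  · intro w hw
    obtain ⟨v, hv, rfl⟩ := Finset.mem_image.1 (Finset.mem_coe.1 hw)
    exact Finset.mem_coe.2 (Finset.mem_image_of_mem (fun v : ι → σ => v a) hv)

/-- Loomis–Whitney inequality in which only the coordinates of `G` are deleted, one at a time. The
remaining coordinates belong to every projection. -/
lemma card_pow_le_prod_card_proj {ι σ : Type*} [Fintype ι] [DecidableEq ι] [DecidableEq σ]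
    (G : Finset ι) (hG : G.Nonempty) (T : Finset (ι → σ)) (hT : T.Nonempty) :
    T.card ^ (G.card - 1) ≤ ∏ j ∈ G, (T.image (delProj j)).card := by
  induction hG using Finset.Nonempty.cons_induction generalizing T with
  | singleton a =>
    simpa using hT
  | cons a G ha hG ih =>
    rw [Finset.card_cons, Finset.prod_cons, Nat.add_sub_cancel]
    have hcard : T.card = ∑ x ∈ T.image (fun v => v a), (T.filter fun v => v a = x).card :=
      Finset.card_eq_sum_card_fiberwise fun v hv =>
        Finset.mem_coe.2 (Finset.mem_image_of_mem (fun v : ι → σ => v a) hv)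
    have hne : ∀ j ∈ G, a ≠ j := fun j hj h => ha (h ▸ hj)
    have main := sum_pow_le_mul_prod_sum_s11 (T.image (fun v => v a)) G hG
      (fun x => ((T.filter fun v => v a = x).card : ℝ))
      (fun j x => (((T.filter fun v => v a = x).image (delProj j)).card : ℝ))
      ((T.image (delProj a)).card : ℝ) (fun _ _ => by positivity) (by positivity)
      (fun _ _ _ _ => by positivity) ?_ ?_
    · rw [← Nat.cast_sum, ← hcard] at main
      have hp : ∏ j ∈ G, ∑ x ∈ T.image (fun v => v a),
          (((T.filter fun v => v a = x).image (delProj j)).card : ℝ) =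
          ∏ j ∈ G, ((T.image (delProj j)).card : ℝ) :=
        Finset.prod_congr rfl fun j hj => by
          rw [card_image_delProj_eq_sum T (hne j hj), Nat.cast_sum]
      rw [hp] at main
      exact_mod_cast main
    · intro j hj
      rw [← Nat.cast_sum, ← card_image_delProj_eq_sum T (hne j hj)]
      exact_mod_cast (hT.image _).card_pos
    · intro x hx
      obtain ⟨v, hv, hvx⟩ := Finset.mem_image.1 hx
      have hTx : (T.filter fun v => v a = x).Nonempty :=
        ⟨v, Finset.mem_filter.2 ⟨hv, hvx⟩⟩
      -- On a slice the coordinate `a` is constant, so deleting it is injective.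
      have h1 : (T.filter fun v => v a = x).card ≤ (T.image (delProj a)).card := by
        refine Finset.card_le_card_of_injOn (delProj a) ?_ ?_
        · intro v hv
          exact Finset.mem_coe.2 (Finset.mem_image_of_mem _
            (Finset.mem_filter.1 (Finset.mem_coe.1 hv)).1)
        · intro v hv w hw hvw
          have hv := (Finset.mem_filter.1 (Finset.mem_coe.1 hv)).2
          have hw := (Finset.mem_filter.1 (Finset.mem_coe.1 hw)).2
          funext i
          by_cases hi : i = a
          · rw [hi, hv, hw]
          · exact congrFun hvw ⟨i, hi⟩
      have h2 := ih _ hTx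
      have h3 : (T.filter fun v => v a = x).card ^ G.card ≤ (T.image (delProj a)).card *
          ∏ j ∈ G, ((T.filter fun v => v a = x).image (delProj j)).card := by
        rw [← Nat.sub_add_cancel hG.card_pos, pow_succ']
        exact Nat.mul_le_mul h1 h2
      exact_mod_cast h3

/-- Two distinct deleted-coordinate projections determine a vector, so prescribing finite ranges
for both leaves finitely many vectors. -/
lemma finite_of_two_proj {ι σ : Type*} (S : ∀ i : ι, Finset ({j : ι // j ≠ i} → σ))
    {a b : ι} (hab : a ≠ b) :
    {v : ι → σ | delProj a v ∈ S a ∧ delProj b v ∈ S b}.Finite := by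
  have hinj : Function.Injective fun v : ι → σ => (delProj a v, delProj b v) := by
    intro v w h
    obtain ⟨h1, h2⟩ := Prod.ext_iff.1 h
    funext i
    by_cases hi : i = a
    · exact congrFun h2 ⟨i, hi ▸ hab⟩
    · exact congrFun h1 ⟨i, hi⟩
  exact (((S a).finite_toSet.prod (S b).finite_toSet).preimage hinj.injOn)


/-- error-tolerant constructive Loomis–Whitney. If every vector of
`S` has its projection onto `[d] \ {i}` inside the given set `S̄_i` for at least
`d - e` indices `i`, then `S` is finite and
`|S| ≤ ∑_{i=0}^{e} ∑_{|B| = i} (d-i-1) · (∏_{j ∉ B} k_j)^{1/(d-i-1)}`. -/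
theorem stmt_11 (d e : ℕ) (hd : 2 ≤ d) (he : e ≤ d - 2) (σ : Type) [DecidableEq σ]
    (Sbar : ∀ i : Fin d, Finset ({j : Fin d // j ≠ i} → σ))
    (k : Fin d → ℕ) (hk : ∀ i, (Sbar i).card = k i) (hk1 : ∀ i, 1 ≤ k i) :
    Set.Finite {v : Fin d → σ |
        d - e ≤ (Finset.univ.filter fun i : Fin d =>
          (fun j : {j : Fin d // j ≠ i} => v j) ∈ Sbar i).card} ∧
    (Nat.card {v : Fin d → σ |
        d - e ≤ (Finset.univ.filter fun i : Fin d =>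
          (fun j : {j : Fin d // j ≠ i} => v j) ∈ Sbar i).card} : ℝ)
      ≤ ∑ i ∈ Finset.range (e + 1),
          ∑ B ∈ Finset.powersetCard i (Finset.univ : Finset (Fin d)),
            ((d : ℝ) - i - 1) *
              (((∏ j ∈ Finset.univ \ B, k j : ℕ) : ℝ) ^ (((d : ℝ) - i - 1)⁻¹)) := by
  have hfin : Set.Finite {v : Fin d → σ |
        d - e ≤ (Finset.univ.filter fun i : Fin d =>
          (fun j : {j : Fin d // j ≠ i} => v j) ∈ Sbar i).card} := by
    refine (Set.finite_iUnion fun p : {p : Fin d × Fin d // p.1 ≠ p.2} =>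
      finite_of_two_proj Sbar p.2).subset ?_
    intro v hv
    rw [Set.mem_setOf_eq] at hv
    obtain ⟨a, ha, b, hb, hab⟩ := Finset.one_lt_card.1 (lt_of_lt_of_le (by omega) hv)
    exact Set.mem_iUnion.2 ⟨⟨(a, b), hab⟩, (Finset.mem_filter.1 ha).2,
      (Finset.mem_filter.1 hb).2⟩
  refine ⟨hfin, ?_⟩
  -- The error set of `v`: the indices whose projection is not in the prescribed set.
  set bad : (Fin d → σ) → Finset (Fin d) := fun v =>
    Finset.univ.filter fun i => delProj i v ∉ Sbar i with hbad
  have hcover : hfin.toFinset ⊆ (Finset.range (e + 1)).biUnion fun i =>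
      (Finset.powersetCard i (Finset.univ : Finset (Fin d))).biUnion fun B =>
        hfin.toFinset.filter fun v => bad v = B := by
    intro v hv
    have hv' : d - e ≤ (Finset.univ.filter fun i : Fin d => delProj i v ∈ Sbar i).card :=
      hfin.mem_toFinset.1 hv
    have hsum := Finset.card_filter_add_card_filter_not (s := (Finset.univ : Finset (Fin d)))
      (fun i => delProj i v ∈ Sbar i)
    rw [Finset.card_univ, Fintype.card_fin] at hsum
    have hb : (bad v).card < e + 1 := by
      simp only [hbad]
      omega
    exact Finset.mem_biUnion.2 ⟨_, Finset.mem_range.2 hb, Finset.mem_biUnion.2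
      ⟨bad v, Finset.mem_powersetCard.2 ⟨Finset.subset_univ _, rfl⟩,
        Finset.mem_filter.2 ⟨hv, rfl⟩⟩⟩
  have hnat : hfin.toFinset.card ≤ ∑ i ∈ Finset.range (e + 1),
      ∑ B ∈ Finset.powersetCard i (Finset.univ : Finset (Fin d)),
        (hfin.toFinset.filter fun v => bad v = B).card :=
    (Finset.card_le_card hcover).trans (Finset.card_biUnion_le.trans
      (Finset.sum_le_sum fun _ _ => Finset.card_biUnion_le))
  rw [Nat.card_coe_set_eq, Set.ncard_eq_toFinset_card _ hfin]
  refine (Nat.cast_le.2 hnat).trans ?_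
  simp only [Nat.cast_sum]
  refine Finset.sum_le_sum fun i hi => Finset.sum_le_sum fun B hB => ?_
  have hi' : i + 2 ≤ d := by
    have := Finset.mem_range.1 hi
    omega
  have hBc : B.card = i := (Finset.mem_powersetCard.1 hB).2
  have hGc : (Finset.univ \ B).card = d - i := by
    rw [Finset.card_sdiff_of_subset (Finset.subset_univ B), Finset.card_univ, Fintype.card_fin,
      hBc]
  have hexp : (d : ℝ) - i - 1 = ((d - i - 1 : ℕ) : ℝ) := by
    rw [Nat.cast_sub (by omega), Nat.cast_sub (by omega), Nat.cast_one]
  rw [hexp]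
  have hm : 1 ≤ d - i - 1 := by omega
  have hcoef : (1 : ℝ) ≤ ((d - i - 1 : ℕ) : ℝ) := by exact_mod_cast hm
  set T := hfin.toFinset.filter fun v => bad v = B with hTdef
  rcases T.eq_empty_or_nonempty with hT | hT
  · rw [hT, Finset.card_empty, Nat.cast_zero]
    positivity
  have hLW := card_pow_le_prod_card_proj (Finset.univ \ B)
    (Finset.card_pos.1 (by omega)) T hT
  rw [hGc] at hLW
  have hk' : ∏ j ∈ Finset.univ \ B, (T.image (delProj j)).card ≤
      ∏ j ∈ Finset.univ \ B, k j := by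
    refine Finset.prod_le_prod' fun j hj => ?_
    rw [← hk j]
    refine Finset.card_le_card fun w hw => ?_
    obtain ⟨v, hv, rfl⟩ := Finset.mem_image.1 hw
    have hjB : j ∉ bad v := by
      rw [(Finset.mem_filter.1 hv).2]
      exact (Finset.mem_sdiff.1 hj).2
    by_contra hcon
    exact hjB (Finset.mem_filter.2 ⟨Finset.mem_univ _, hcon⟩)
  have hpow : (T.card : ℝ) ^ (d - i - 1) ≤ ((∏ j ∈ Finset.univ \ B, k j : ℕ) : ℝ) := by
    exact_mod_cast hLW.trans hk'
  have hroot : (T.card : ℝ) ≤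
      ((∏ j ∈ Finset.univ \ B, k j : ℕ) : ℝ) ^ (((d - i - 1 : ℕ) : ℝ)⁻¹) := by
    rw [← Real.pow_rpow_inv_natCast (Nat.cast_nonneg T.card) (by omega : d - i - 1 ≠ 0)]
    exact Real.rpow_le_rpow (by positivity) hpow (by positivity)
  exact hroot.trans (le_mul_of_one_le_left (by positivity) hcoef)
end

section
/- Let N, m, k ≥ 1 be natural numbers, C ≥ 0 a real, and p ∈ [0,1]. Suppose there exist a probability space (Ω, μ), a measurable map Φ : Ω → (m×N real matrices), and a jointly measurable decoder A : Ω × ℝ^m → ℝ^N such that for every x ∈ ℝ^N, μ{ ω : ‖x − A(ω, Φ(ω)·x)‖₂ > C · err_k(x) } ≤ p. Then for every integer s ≥ 1 there exist a probability space (Ω′, μ′), a measurable map Φ′ : Ω′ → ((s·m)×N real matrices), and a jointly measurable decoder A′ : Ω′ × ℝ^{s·m} → ℝ^N such that for every x ∈ ℝ^N, μ′{ ω : ‖x − A′(ω, Φ′(ω)·x)‖₂ > √3 · C · err_k(x) } ≤ (4·e·p)^{s/4}, where e is Euler's number. -/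
/-!
The new scheme runs `s` independent copies of the old one, on the product space `Fin s → Ω`, and
outputs the coordinatewise median of the `s` reconstructions.

Suppose at most `s / 4` of the copies fail, say `f` of them. If the median errs by `d i` in
coordinate `i`, then at least half of the copies err by at least `d i` in that coordinate, hence
so do at least `s / 2 - f` of the successful copies. Summing squares over the coordinates,
`(s / 2 - f) * ∑ i, d i ^ 2 ≤ (s - f) * E ^ 2`, where `E` bounds the error of each successful copy,
and `s - f ≤ 3 * (s / 2 - f)`; so the median errs by at most `√3 * E` (`norm_sub_median_le`).

Otherwise some set of `t = s / 4 + 1` copies (with the quotient rounded down) fails entirely,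
which by a union bound and independence has probability at most
`(s.choose t) * p ^ t ≤ (e * s / t) ^ t * p ^ t ≤ (4 * e * p) ^ t` (`pi_many_le`, `choose_mul_pow_le`).
Since `t ≥ s / 4` this is at most `(4 * e * p) ^ (s / 4)` when `4 * e * p ≤ 1`; for larger `p` the
claimed bound is at least `1`.
-/

open MeasureTheory

/-- A median of `v`: its `⌈s/2⌉`-th largest entry, encoded as the maximum over all
`⌈s/2⌉`-element index sets of the minimum of `v` on that set, a form in which measurability
is immediate. For `s = 0` it is a junk value. -/
noncomputable def median {s : ℕ} (v : Fin s → ℝ) : ℝ :=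
  ⨆ S : {S : Finset (Fin s) // S.card = (s + 1) / 2}, ⨅ j : S.1, v j

lemma measurable_median {s : ℕ} : Measurable (median : (Fin s → ℝ) → ℝ) := by
  unfold median
  exact Measurable.iSup fun S => Measurable.iInf fun j => measurable_pi_apply _

lemma median_le_card {s : ℕ} (hs : 1 ≤ s) (v : Fin s → ℝ) :
    s ≤ 2 * (Finset.univ.filter fun j => median v ≤ v j).card := by
  obtain ⟨S₀, -, hS₀⟩ := Finset.exists_subset_card_eq
    (s := (Finset.univ : Finset (Fin s))) (n := (s + 1) / 2) (by simp; omega)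
  have : Nonempty {S : Finset (Fin s) // S.card = (s + 1) / 2} := ⟨⟨S₀, hS₀⟩⟩
  obtain ⟨S, hS⟩ := exists_eq_ciSup_of_finite
    (f := fun S : {S : Finset (Fin s) // S.card = (s + 1) / 2} => ⨅ j : S.1, v j)
  have hsub : S.1 ⊆ Finset.univ.filter fun j => median v ≤ v j := by
    intro j hj
    simp only [Finset.mem_filter, Finset.mem_univ, true_and]
    change (⨆ S : {S : Finset (Fin s) // S.card = (s + 1) / 2}, ⨅ j : S.1, v j) ≤ v j
    rw [← hS]
    exact ciInf_le (f := fun j : S.1 => v j) (Set.finite_range _).bddBelow ⟨j, hj⟩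
  have := Finset.card_le_card hsub
  have := S.2
  omega

lemma le_median_card {s : ℕ} (hs : 1 ≤ s) (v : Fin s → ℝ) :
    s ≤ 2 * (Finset.univ.filter fun j => v j ≤ median v).card := by
  have key : (Finset.univ.filter fun j => ¬ v j ≤ median v).card < (s + 1) / 2 := by
    by_contra! h
    obtain ⟨S, hSsub, hS⟩ := Finset.exists_subset_card_eq h
    have hne : S.Nonempty := Finset.card_pos.mp (by omega)
    have : Nonempty S := hne.to_subtype
    obtain ⟨j, hj⟩ := exists_eq_ciInf_of_finite (f := fun j : S => v j)
    have h1 : (⨅ j : S, v j) ≤ median v :=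
      le_ciSup (f := fun S : {S : Finset (Fin s) // S.card = (s + 1) / 2} => ⨅ j : S.1, v j)
        (Set.finite_range _).bddAbove ⟨S, hS⟩
    have h2 := hSsub j.2
    simp only [Finset.mem_filter, Finset.mem_univ, true_and] at h2
    exact h2.not_ge (hj ▸ h1)
  have := Finset.card_filter_add_card_filter_not (s := (Finset.univ : Finset (Fin s)))
    (fun j => v j ≤ median v)
  simp only [Finset.card_univ, Fintype.card_fin] at this
  omega

/-- At least half of the entries are at least as far from `a` as the median is. -/
lemma median_far_card {s : ℕ} (hs : 1 ≤ s) (v : Fin s → ℝ) (a : ℝ) :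
    s ≤ 2 * (Finset.univ.filter fun j => (a - median v) ^ 2 ≤ (a - v j) ^ 2).card := by
  rcases le_total a (median v) with h | h
  · refine (median_le_card hs v).trans (Nat.mul_le_mul_left 2 (Finset.card_le_card ?_))
    intro j
    simp only [Finset.mem_filter, Finset.mem_univ, true_and]
    intro hj
    nlinarith
  · refine (le_median_card hs v).trans (Nat.mul_le_mul_left 2 (Finset.card_le_card ?_))
    intro j
    simp only [Finset.mem_filter, Finset.mem_univ, true_and]
    intro hj
    nlinarith

lemma norm_sub_median_le {N s : ℕ} (hs : 1 ≤ s) (x : EuclideanSpace ℝ (Fin N))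
    (z : Fin s → EuclideanSpace ℝ (Fin N)) (E : ℝ) (hE : 0 ≤ E)
    (F : Finset (Fin s)) (hF : 4 * F.card ≤ s) (hz : ∀ j ∉ F, ‖x - z j‖ ≤ E) :
    ‖x - WithLp.toLp 2 fun i => median fun j => z j i‖ ≤ √3 * E := by
  have hsR : (1 : ℝ) ≤ s := by exact_mod_cast hs
  have hFR : 4 * (F.card : ℝ) ≤ s := by exact_mod_cast hF
  have hcoord (i : Fin N) : ((s : ℝ) / 2 - F.card) * (x i - median fun j => z j i) ^ 2
      ≤ ∑ j ∈ Fᶜ, (x i - z j i) ^ 2 := by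
    set D := Finset.univ.filter fun j =>
      (x i - median fun j => z j i) ^ 2 ≤ (x i - z j i) ^ 2 with hD
    have hDcard : (s : ℝ) ≤ 2 * D.card := by
      exact_mod_cast median_far_card hs (fun j => z j i) (x i)
    have hsd : (D.card : ℝ) ≤ (D \ F).card + F.card := by
      exact_mod_cast Finset.card_le_card_sdiff_add_card
    calc ((s : ℝ) / 2 - F.card) * (x i - median fun j => z j i) ^ 2
        ≤ (D \ F).card * (x i - median fun j => z j i) ^ 2 := by
          gcongr
          linarith
      _ = ∑ j ∈ D \ F, (x i - median fun j => z j i) ^ 2 := by simp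
      _ ≤ ∑ j ∈ D \ F, (x i - z j i) ^ 2 :=
          Finset.sum_le_sum fun j hj => (Finset.mem_filter.mp (Finset.mem_sdiff.mp hj).1).2
      _ ≤ ∑ j ∈ Fᶜ, (x i - z j i) ^ 2 := by
          refine Finset.sum_le_sum_of_subset_of_nonneg ?_ fun _ _ _ => sq_nonneg _
          intro j hj
          exact Finset.mem_compl.mpr (Finset.mem_sdiff.mp hj).2
  have hsum : ((s : ℝ) / 2 - F.card) * ‖x - WithLp.toLp 2 fun i => median fun j => z j i‖ ^ 2
      ≤ ((s : ℝ) - F.card) * E ^ 2 := by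
    calc ((s : ℝ) / 2 - F.card) * ‖x - WithLp.toLp 2 fun i => median fun j => z j i‖ ^ 2
        = ∑ i, ((s : ℝ) / 2 - F.card) * (x i - median fun j => z j i) ^ 2 := by
          rw [EuclideanSpace.real_norm_sq_eq, Finset.mul_sum]
          simp
      _ ≤ ∑ i, ∑ j ∈ Fᶜ, (x i - z j i) ^ 2 := Finset.sum_le_sum fun i _ => hcoord i
      _ = ∑ j ∈ Fᶜ, ‖x - z j‖ ^ 2 := by
          rw [Finset.sum_comm]
          refine Finset.sum_congr rfl fun j _ => ?_
          rw [EuclideanSpace.real_norm_sq_eq]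
          simp
      _ ≤ ∑ j ∈ Fᶜ, E ^ 2 := by
          refine Finset.sum_le_sum fun j hj => ?_
          have := hz j (Finset.mem_compl.mp hj)
          gcongr
      _ = ((s : ℝ) - F.card) * E ^ 2 := by
          have hle : F.card ≤ s := by omega
          simp [Finset.card_compl, Nat.cast_sub hle]
  have hpos : 0 < (s : ℝ) / 2 - F.card := by linarith
  have h3 : ‖x - WithLp.toLp 2 fun i => median fun j => z j i‖ ^ 2 ≤ 3 * E ^ 2 := by
    refine le_of_mul_le_mul_left ?_ hpos
    nlinarith [sq_nonneg E]
  refine abs_le_of_sq_le_sq' ?_ (by positivity) |>.2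
  rw [mul_pow, Real.sq_sqrt (by norm_num)]
  exact h3

/-- Union bound over the `t`-element sets of copies; `B` need not be measurable. -/
lemma pi_many_le {Ω : Type} [MeasurableSpace Ω] (μ : Measure Ω) [IsProbabilityMeasure μ]
    (B : Set Ω) (p : ℝ) (hp0 : 0 ≤ p) (hB : μ B ≤ ENNReal.ofReal p) (s t : ℕ) :
    (Measure.pi fun _ : Fin s => μ) {ω | ∃ S : Finset (Fin s), S.card = t ∧ ∀ j ∈ S, ω j ∈ B}
      ≤ ENNReal.ofReal (s.choose t * p ^ t) := by
  classical
  calc (Measure.pi fun _ : Fin s => μ) {ω | ∃ S : Finset (Fin s), S.card = t ∧ ∀ j ∈ S, ω j ∈ B}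
      ≤ (Measure.pi fun _ : Fin s => μ)
        (⋃ S ∈ (Finset.univ : Finset (Fin s)).powersetCard t,
          Set.pi Set.univ fun j => if j ∈ S then B else Set.univ) := by
        refine measure_mono ?_
        rintro ω ⟨S, hS, hω⟩
        simp only [Set.mem_iUnion]
        refine ⟨S, by simpa using hS, fun j _ => ?_⟩
        by_cases hj : j ∈ S
        · simpa [hj] using hω j hj
        · simp [hj]
    _ ≤ ∑ S ∈ (Finset.univ : Finset (Fin s)).powersetCard t,
          (Measure.pi fun _ : Fin s => μ)
            (Set.pi Set.univ fun j => if j ∈ S then B else Set.univ) :=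
        measure_biUnion_finset_le _ _
    _ ≤ ∑ S ∈ (Finset.univ : Finset (Fin s)).powersetCard t, ENNReal.ofReal p ^ t := by
        refine Finset.sum_le_sum fun S hS => ?_
        rw [Measure.pi_pi]
        calc ∏ j, μ (if j ∈ S then B else Set.univ)
            = ∏ j, if j ∈ S then μ B else 1 := by
              refine Finset.prod_congr rfl fun j _ => ?_
              split_ifs <;> simp
          _ = μ B ^ t := by
              rw [Finset.prod_ite_mem, Finset.univ_inter, Finset.prod_const,
                (Finset.mem_powersetCard.mp hS).2]
          _ ≤ ENNReal.ofReal p ^ t := by gcongr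
    _ = ENNReal.ofReal (s.choose t * p ^ t) := by
        rw [Finset.sum_const, Finset.card_powersetCard, Finset.card_univ, Fintype.card_fin,
          nsmul_eq_mul, ENNReal.ofReal_mul (by positivity), ENNReal.ofReal_natCast,
          ENNReal.ofReal_pow hp0]

/-- With `t = s / 4 + 1`, this follows from `s.choose t ≤ s ^ t / t!`, `s ≤ 4 * t` and
`t ^ t / t! ≤ e ^ t`. -/
lemma choose_mul_pow_le (s : ℕ) (p : ℝ) (hp0 : 0 ≤ p) (h : 4 * Real.exp 1 * p ≤ 1) (hs : 1 ≤ s) :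
    (s.choose (s / 4 + 1) : ℝ) * p ^ (s / 4 + 1) ≤ (4 * Real.exp 1 * p) ^ ((s : ℝ) / 4) := by
  set t := s / 4 + 1 with ht
  have hst : (s : ℝ) ≤ 4 * t := by
    have : s ≤ 4 * t := by omega
    exact_mod_cast this
  have hchoose : (s.choose t : ℝ) ≤ (4 * Real.exp 1) ^ t := by
    calc (s.choose t : ℝ) ≤ (s : ℝ) ^ t / t.factorial := Nat.choose_le_pow_div t s
      _ ≤ (4 * t : ℝ) ^ t / t.factorial := by gcongr
      _ = 4 ^ t * ((t : ℝ) ^ t / t.factorial) := by rw [mul_pow]; ring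
      _ ≤ 4 ^ t * Real.exp t := by
          gcongr
          exact Real.pow_div_factorial_le_exp _ (by positivity) t
      _ = (4 * Real.exp 1) ^ t := by rw [mul_pow, ← Real.exp_nat_mul, mul_one]
  calc (s.choose t : ℝ) * p ^ t ≤ (4 * Real.exp 1) ^ t * p ^ t := by gcongr
    _ = (4 * Real.exp 1 * p) ^ (t : ℝ) := by rw [← mul_pow, Real.rpow_natCast]
    _ ≤ (4 * Real.exp 1 * p) ^ ((s : ℝ) / 4) := by
        have hsR : (1 : ℝ) ≤ s := by exact_mod_cast hs
        rcases (by positivity : 0 ≤ 4 * Real.exp 1 * p).eq_or_lt with h0 | h0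
        · have htR : (t : ℝ) ≠ 0 := by rw [ht]; positivity
          rw [← h0, Real.zero_rpow htR, Real.zero_rpow (by positivity)]
        · exact Real.rpow_le_rpow_of_exponent_ge h0 h (by linarith)

/-- amplification of the failure probability. Given a sparse
recovery scheme with `m` measurements, approximation factor `C` and failure
probability `p`, for every `s ≥ 1` there is a scheme with `s·m` measurements,
approximation factor `√3·C` and failure probability `(4ep)^{s/4}`. -/
theorem stmt_12 (N m k : ℕ) (hN : 1 ≤ N) (hm : 1 ≤ m) (hk : 1 ≤ k)
    (C p : ℝ) (hC : 0 ≤ C) (hp0 : 0 ≤ p) (hp1 : p ≤ 1)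
    (Ω : Type) [MeasurableSpace Ω] (μ : Measure Ω) [IsProbabilityMeasure μ]
    (Φ : Ω → Matrix (Fin m) (Fin N) ℝ) (hΦ : ∀ i j, Measurable fun ω => Φ ω i j)
    (A : Ω × EuclideanSpace ℝ (Fin m) → EuclideanSpace ℝ (Fin N)) (hA : Measurable A)
    (hrec : ∀ x : EuclideanSpace ℝ (Fin N),
      μ {ω | C * errK N k x < ‖x - A (ω, Matrix.toEuclideanLin (Φ ω) x)‖}
        ≤ ENNReal.ofReal p) :
    ∀ s : ℕ, 1 ≤ s →
      ∃ (Ω' : Type) (_ : MeasurableSpace Ω') (μ' : Measure Ω'),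
        IsProbabilityMeasure μ' ∧
        ∃ (Φ' : Ω' → Matrix (Fin (s * m)) (Fin N) ℝ)
          (A' : Ω' × EuclideanSpace ℝ (Fin (s * m)) → EuclideanSpace ℝ (Fin N)),
          (∀ i j, Measurable fun ω => Φ' ω i j) ∧ Measurable A' ∧
          ∀ x : EuclideanSpace ℝ (Fin N),
            μ' {ω | Real.sqrt 3 * C * errK N k x
                < ‖x - A' (ω, Matrix.toEuclideanLin (Φ' ω) x)‖}
              ≤ ENNReal.ofReal ((4 * Real.exp 1 * p) ^ ((s : ℝ) / 4)) := by
  intro s hs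
  refine ⟨Fin s → Ω, inferInstance, Measure.pi fun _ => μ, inferInstance,
    fun ω => Matrix.of fun r i => Φ (ω (finProdFinEquiv.symm r).1) (finProdFinEquiv.symm r).2 i,
    fun q => WithLp.toLp 2 fun i => median fun j =>
      A (q.1 j, WithLp.toLp 2 fun r => q.2 (finProdFinEquiv (j, r))) i, ?_, ?_, ?_⟩
  · intro r i
    exact (hΦ _ i).comp (measurable_pi_apply _)
  · refine (WithLp.measurable_toLp 2 _).comp (measurable_pi_lambda _ fun i =>
      measurable_median.comp (measurable_pi_lambda _ fun j => ?_))
    have hin : Measurable fun q : (Fin s → Ω) × EuclideanSpace ℝ (Fin (s * m)) =>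
        ((q.1 j, WithLp.toLp 2 fun r => q.2 (finProdFinEquiv (j, r))) :
          Ω × EuclideanSpace ℝ (Fin m)) := by
      refine Measurable.prodMk ((measurable_pi_apply j).comp measurable_fst)
        ((WithLp.measurable_toLp 2 _).comp (measurable_pi_lambda _ fun r => ?_))
      exact ((measurable_pi_apply _).comp (WithLp.measurable_ofLp 2 _)).comp measurable_snd
    exact (measurable_pi_apply i).comp ((WithLp.measurable_ofLp 2 _).comp (hA.comp hin))
  · intro x
    rcases le_total (4 * Real.exp 1 * p) 1 with h | h
    swap
    -- The bound is at least `1` here, so there is nothing to prove.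
    · refine prob_le_one.trans ?_
      rw [ENNReal.one_le_ofReal]
      exact Real.one_le_rpow h (by positivity)
    · refine le_trans (measure_mono ?_) ((pi_many_le μ _ p hp0 (hrec x) s (s / 4 + 1)).trans
        (ENNReal.ofReal_le_ofReal (choose_mul_pow_le s p hp0 h hs)))
      intro ω hω
      simp only [Set.mem_ofPred_eq] at hω ⊢
      by_contra hno
      refine absurd hω (not_lt.mpr ?_)
      -- The `j`-th block of the stacked measurements is the measurement made by the `j`-th copy.
      have hblock (j : Fin s) : (WithLp.toLp 2 fun r =>
          Matrix.toEuclideanLin (Matrix.of fun (r : Fin (s * m)) i =>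
            Φ (ω (finProdFinEquiv.symm r).1) (finProdFinEquiv.symm r).2 i) x
            (finProdFinEquiv (j, r)) : EuclideanSpace ℝ (Fin m))
          = Matrix.toEuclideanLin (Φ (ω j)) x := by
        ext r
        simp only [Matrix.toLpLin_apply, Matrix.mulVec, dotProduct, Matrix.of_apply,
          Equiv.symm_apply_apply]
      simp only [hblock]
      rw [mul_assoc]
      set F := Finset.univ.filter fun j =>
        C * errK N k x < ‖x - A (ω j, Matrix.toEuclideanLin (Φ (ω j)) x)‖ with hFdef
      refine norm_sub_median_le hs x (fun j => A (ω j, Matrix.toEuclideanLin (Φ (ω j)) x))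
        (C * errK N k x) (mul_nonneg hC Metric.infDist_nonneg) F ?_ ?_
      · by_contra! hcard
        obtain ⟨S, hSF, hS⟩ := Finset.exists_subset_card_eq (s := F) (n := s / 4 + 1) (by omega)
        exact hno ⟨S, hS, fun j hj => (Finset.mem_filter.mp (hSF hj)).2⟩
      · intro j hj
        simpa [hFdef] using hj
end

section
/- Let F be a finite field, r ≥ 1 an integer, and α_1, …, α_r distinct elements of F. Let b be an integer with 1 ≤ b ≤ r, let ℓ be a natural number, and let ρ be a real number with 0 ≤ ρ < (1/2)·(1 − b/r). Let S_1, …, S_r ⊆ F be subsets with |S_i| ≤ ℓ for every i. Then the number of polynomials p ∈ F[X] with deg p < b such that p(α_i) ∈ S_i holds for at least (1−ρ)·r of the indices i ∈ {1,…,r} is at most ℓ^r. -/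
/-! A received set of lists `S₁, …, S_r` is first padded so that no list is empty: this keeps the
sizes at most `ℓ` when `ℓ ≥ 1`, and for `ℓ = 0` no polynomial qualifies because `ρ < 1/2`.
Each qualifying `p` is then sent to the word in `∏ Sᵢ` equal to `p(αᵢ)` wherever this value lies
in `Sᵢ`, and to a fixed default elsewhere. If `p` and `q` give the same word, they agree on the
intersection of their two sets of good indices, which has size at least `(1 - 2ρ) r > b`;
as both have degree `< b`, they are equal. So the map into a set of at most `ℓ ^ r` words is
injective. -/

/-- Two polynomials of degree `< b` which agree wherever they both hit the lists coincide, provided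
each hits the lists in at least `(1 - ρ) r` places: the common places number more than `b`. -/
theorem eq_of_agree_on_common {F : Type} [Field F] [DecidableEq F]
    {r : ℕ} (hr : 1 ≤ r) {α : Fin r → F} (hα : Function.Injective α)
    {b : ℕ} {ρ : ℝ} (hρ : ρ < (1 / 2) * (1 - (b : ℝ) / r)) {S : Fin r → Finset F}
    {p q : Polynomial F} (hp : p.degree < (b : WithBot ℕ)) (hq : q.degree < (b : WithBot ℕ))
    (hpc : (1 - ρ) * (r : ℝ) ≤
      ((Finset.univ.filter fun i : Fin r => p.eval (α i) ∈ S i).card : ℝ))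
    (hqc : (1 - ρ) * (r : ℝ) ≤
      ((Finset.univ.filter fun i : Fin r => q.eval (α i) ∈ S i).card : ℝ))
    (h : ∀ i, p.eval (α i) ∈ S i → q.eval (α i) ∈ S i → p.eval (α i) = q.eval (α i)) :
    p = q := by
  set A := Finset.univ.filter fun i : Fin r => p.eval (α i) ∈ S i with hA
  set B := Finset.univ.filter fun i : Fin r => q.eval (α i) ∈ S i with hB
  have hr0 : (0 : ℝ) < r := by exact_mod_cast hr
  have hcard : b ≤ (A ∩ B).card := by
    have h1 : (A ∪ B).card + (A ∩ B).card = A.card + B.card := Finset.card_union_add_card_inter A B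
    have h2 : (A ∪ B).card ≤ r := by simpa using Finset.card_le_univ (A ∪ B)
    have h1' : ((A ∪ B).card : ℝ) + (A ∩ B).card = A.card + B.card := by exact_mod_cast h1
    have h2' : ((A ∪ B).card : ℝ) ≤ r := by exact_mod_cast h2
    have h3 : 2 * ρ * r < r - b := by
      have := mul_lt_mul_of_pos_right hρ hr0
      have e : (1 / 2) * (1 - (b : ℝ) / r) * r = (r - b) / 2 := by field_simp
      linarith
    have h4 : (b : ℝ) ≤ (A ∩ B).card := by linarith
    exact_mod_cast h4
  have hb : (b : WithBot ℕ) ≤ ((A ∩ B).card : WithBot ℕ) := by exact_mod_cast hcard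
  refine Polynomial.eq_of_degrees_lt_of_eval_index_eq (A ∩ B) (v := α) hα.injOn
    (hp.trans_le hb) (hq.trans_le hb) fun i hi => ?_
  simp only [hA, hB, Finset.mem_inter, Finset.mem_filter, Finset.mem_univ, true_and] at hi
  exact h i hi.1 hi.2

/-- list recoverability of Reed–Solomon codes. Over a finite field
`F` with distinct evaluation points `α₁, …, α_r`, for `0 ≤ ρ < (1/2)(1 - b/r)` and
input lists `S₁, …, S_r` of size at most `ℓ`, at most `ℓ^r` polynomials of degree
`< b` satisfy `p(αᵢ) ∈ Sᵢ` for at least `(1-ρ)·r` indices `i`. -/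
theorem stmt_13 (F : Type) [Field F] [Fintype F] [DecidableEq F]
    (r : ℕ) (hr : 1 ≤ r) (α : Fin r → F) (hα : Function.Injective α)
    (b : ℕ) (hb1 : 1 ≤ b) (hbr : b ≤ r) (ℓ : ℕ) (ρ : ℝ)
    (hρ0 : 0 ≤ ρ) (hρ : ρ < (1 / 2) * (1 - (b : ℝ) / r))
    (S : Fin r → Finset F) (hS : ∀ i, (S i).card ≤ ℓ) :
    Set.Finite {p : Polynomial F | p.degree < (b : WithBot ℕ) ∧
        (1 - ρ) * (r : ℝ) ≤
          ((Finset.univ.filter fun i : Fin r => p.eval (α i) ∈ S i).card : ℝ)} ∧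
    Nat.card {p : Polynomial F | p.degree < (b : WithBot ℕ) ∧
        (1 - ρ) * (r : ℝ) ≤
          ((Finset.univ.filter fun i : Fin r => p.eval (α i) ∈ S i).card : ℝ)}
      ≤ ℓ ^ r := by
  classical
  have hr0 : (0 : ℝ) < r := by exact_mod_cast hr
  set X : Set (Polynomial F) := {p : Polynomial F | p.degree < (b : WithBot ℕ) ∧
        (1 - ρ) * (r : ℝ) ≤
          ((Finset.univ.filter fun i : Fin r => p.eval (α i) ∈ S i).card : ℝ)} with hX
  rcases Nat.eq_zero_or_pos ℓ with rfl | hℓ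
  · have hS0 : ∀ i, S i = ∅ := fun i => Finset.card_eq_zero.1 (Nat.le_zero.1 (hS i))
    have hXe : X = ∅ := by
      refine Set.eq_empty_of_forall_notMem fun p hp => ?_
      have h1 := hp.2
      simp only [hS0, Finset.notMem_empty, Finset.filter_false, Finset.card_empty,
        Nat.cast_zero] at h1
      have h2 : 0 ≤ (b : ℝ) / r := by positivity
      have h3 : 0 < (1 - ρ) * (r : ℝ) := mul_pos (by linarith) hr0
      linarith
    rw [hXe]
    simp
  · have hT : ∀ i, ∃ T : Finset F, S i ⊆ T ∧ T.Nonempty ∧ T.card ≤ ℓ := fun i => by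
      rcases (S i).eq_empty_or_nonempty with h | h
      · exact ⟨{0}, by simp [h], by simp, by rw [Finset.card_singleton]; exact hℓ⟩
      · exact ⟨S i, subset_rfl, h, hS i⟩
    choose T hST hTne hTc using hT
    choose d hd using hTne
    let f : Polynomial F → Fin r → F := fun p i =>
      if p.eval (α i) ∈ S i then p.eval (α i) else d i
    have hmaps : Set.MapsTo f X (Fintype.piFinset T : Set (Fin r → F)) := by
      intro p _
      simp only [Finset.mem_coe, Fintype.mem_piFinset, f]
      intro i
      split_ifs with h
      · exact hST i h
      · exact hd i
    have hinj : Set.InjOn f X := by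
      intro p hp q hq hpq
      refine eq_of_agree_on_common hr hα hρ hp.1 hq.1 hp.2 hq.2 fun i h1 h2 => ?_
      simpa [f, h1, h2] using congrFun hpq i
    refine ⟨Set.Finite.of_injOn hmaps hinj (Finset.finite_toSet _), ?_⟩
    calc Nat.card X = X.ncard := Nat.card_coe_set_eq X
      _ ≤ (Fintype.piFinset T : Set (Fin r → F)).ncard :=
        Set.ncard_le_ncard_of_injOn f hmaps hinj (Finset.finite_toSet _)
      _ = ∏ i, (T i).card := by rw [Set.ncard_coe_finset, Fintype.card_piFinset]
      _ ≤ ∏ _i : Fin r, ℓ := Finset.prod_le_prod' fun i _ => hTc i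
      _ = ℓ ^ r := by simp
end

section
/- Let s ≥ 1 and ℓ ≥ 1 be natural numbers, t ≥ 0 a real number, and X a type. Let I_1, …, I_s be finite subsets of X with |I_j| ≤ ℓ for every j, and let H be a finite subset of X. Define J := { i ∈ X : i belongs to more than s/2 of the sets I_1, …, I_s } (i.e. 2·|{j : i ∈ I_j}| > s). Then: (i) |J| < 2ℓ; and (ii) if the number g of indices j ∈ {1,…,s} with |H ∖ I_j| ≤ t satisfies 4g ≥ 3s, then |H ∖ J| ≤ 3t. -/
/-!
Both parts are double counts of pairs `(i, j)` of an element and an index.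

For the size bound, count the pairs with `i ∈ J` and `i ∈ I j`: each `i ∈ J` lies in at least
`(s + 1) / 2` lists, so `|J| (s + 1) ≤ 2 s ℓ`.

For the missed elements, let `g` be the number of good indices, and count the pairs with
`i ∈ H \ J`, `j` good and `i ∉ I j`. Each such `i` lies in at most `s / 2` lists, so it is missed by
at least `g - s / 2` good ones, while each good list misses at most `t` elements of `H`. Hence
`|H \ J| (g - s / 2) ≤ g t`, and `g ≥ 3 s / 4` gives `g ≤ 3 (g - s / 2)` with `g - s / 2 > 0`.
-/


/-- majority vote on candidate lists. Let `I₁, …, I_s` be finite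
lists of size at most `ℓ` and `H` a finite set. Let `J` be the set of elements
appearing in strictly more than `s/2` of the lists. Then `|J| < 2ℓ`, and if at least
a `3/4` fraction of the lists each miss at most `t` elements of `H`, then `J` misses
at most `3t` elements of `H`. -/
theorem stmt_14 (s ℓ : ℕ) (hs : 1 ≤ s) (hℓ : 1 ≤ ℓ) (t : ℝ) (ht : 0 ≤ t)
    (X : Type) [DecidableEq X]
    (I : Fin s → Finset X) (hI : ∀ j, (I j).card ≤ ℓ) (H : Finset X)
    (J : Finset X)
    (hJ : ∀ i : X, i ∈ J ↔
      (s : ℝ) < 2 * ((Finset.univ.filter fun j : Fin s => i ∈ I j).card : ℝ)) :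
    ((J.card : ℝ) < 2 * ℓ) ∧
    (3 * (s : ℝ) ≤
        4 * ((Finset.univ.filter fun j : Fin s => ((H \ I j).card : ℝ) ≤ t).card : ℝ) →
      ((H \ J).card : ℝ) ≤ 3 * t) := by
  constructor
  · have h_count : ∑ i ∈ J, (Finset.univ.filter fun j : Fin s => i ∈ I j).card
        = ∑ j : Fin s, (J.filter fun i => i ∈ I j).card :=
      Finset.sum_card_bipartiteAbove_eq_sum_card_bipartiteBelow (fun i j => i ∈ I j)
    have h_upper : ∑ j : Fin s, (J.filter fun i => i ∈ I j).card ≤ s * ℓ := by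
      have := Finset.sum_le_card_nsmul Finset.univ
        (fun j : Fin s => (J.filter fun i => i ∈ I j).card) ℓ (fun j _ =>
          (Finset.card_le_card fun i hi => (Finset.mem_filter.1 hi).2).trans (hI j))
      simpa using this
    -- The majority is strict, so by integrality twice the count is at least `s + 1`.
    have h_lower : J.card * (s + 1)
        ≤ ∑ i ∈ J, 2 * (Finset.univ.filter fun j : Fin s => i ∈ I j).card := by
      refine Finset.card_nsmul_le_sum J _ (s + 1) fun i hi => ?_
      have := (hJ i).1 hi
      exact_mod_cast this
    rw [← Finset.mul_sum, h_count] at h_lower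
    have h_lt : J.card < 2 * ℓ := by
      by_contra! h
      nlinarith [Nat.mul_le_mul_right (s + 1) h]
    exact_mod_cast h_lt
  · intro hg
    set G := Finset.univ.filter fun j : Fin s => ((H \ I j).card : ℝ) ≤ t with hG
    have h_count : ∑ i ∈ H \ J, (G.filter fun j => i ∉ I j).card
        = ∑ j ∈ G, ((H \ J).filter fun i => i ∉ I j).card :=
      Finset.sum_card_bipartiteAbove_eq_sum_card_bipartiteBelow (fun i j => i ∉ I j)
    have h_upper : ∑ j ∈ G, (((H \ J).filter fun i => i ∉ I j).card : ℝ) ≤ G.card * t := by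
      rw [← nsmul_eq_mul]
      refine Finset.sum_le_card_nsmul G _ t fun j hj => ?_
      refine le_trans ?_ (Finset.mem_filter.1 hj).2
      exact_mod_cast Finset.card_le_card fun i hi => by
        simp only [Finset.mem_filter, Finset.mem_sdiff] at hi ⊢
        exact ⟨hi.1.1, hi.2⟩
    have h_lower : ((H \ J).card : ℝ) * (G.card - s / 2)
        ≤ ∑ i ∈ H \ J, ((G.filter fun j => i ∉ I j).card : ℝ) := by
      rw [← nsmul_eq_mul]
      refine Finset.card_nsmul_le_sum _ _ _ fun i hi => ?_
      have h_few := mt (hJ i).2 (Finset.mem_sdiff.1 hi).2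
      have h_split : ((G.filter fun j => i ∈ I j).card : ℝ)
          + (G.filter fun j => i ∉ I j).card = G.card := by
        exact_mod_cast Finset.card_filter_add_card_filter_not (s := G) (fun j => i ∈ I j)
      have h_sub : ((G.filter fun j => i ∈ I j).card : ℝ)
          ≤ (Finset.univ.filter fun j : Fin s => i ∈ I j).card := by
        exact_mod_cast Finset.card_le_card
          (Finset.filter_subset_filter _ (Finset.subset_univ G))
      linarith
    have h_cast : ∑ i ∈ H \ J, ((G.filter fun j => i ∉ I j).card : ℝ)
        = ∑ j ∈ G, (((H \ J).filter fun i => i ∉ I j).card : ℝ) := by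
      exact_mod_cast h_count
    have hs' : (1 : ℝ) ≤ s := by exact_mod_cast hs
    have h_pos : (0 : ℝ) < G.card - s / 2 := by linarith
    refine le_of_mul_le_mul_right ?_ h_pos
    have h_three : (G.card : ℝ) * t ≤ (3 * (G.card - s / 2)) * t :=
      mul_le_mul_of_nonneg_right (by linarith) ht
    linarith
end

section
/- Let e ≥ 2 and h ≥ 0 be integers. Let T be a finite rooted tree in which every internal (non-leaf) node has at least e children and every leaf has depth at most h. Then there exists an integer j with 0 ≤ j ≤ h such that the number of leaves of T at depth exactly j is at least (e/2)^j. -/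
/-!
Give a leaf at depth `j` the weight `e⁻ʲ`. Every internal node has at least `e` children, so a
reverse Kraft inequality holds: the total weight is at least `1` (`GTree.one_le_kraft`). If every
level `j ≤ h` had fewer than `(e/2)^j` leaves, then level `0` would have none at all, and level
`j ≥ 1` would weigh less than `2⁻ʲ`, so the total weight would be at most `1 - 2⁻ʰ < 1`.
-/

/-- A finite rooted tree: a node carrying a (finite) list of subtrees. -/
inductive GTree : Type where
  | node : List GTree → GTree

/-- `leafCount T j` is the number of leaves of `T` at depth exactly `j`
(the depth of a node is its distance from the root). -/
def GTree.leafCount : GTree → ℕ → ℕ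
  | .node cs, 0 => if cs.isEmpty then 1 else 0
  | .node cs, j + 1 => (cs.map fun c => c.leafCount j).sum

/-- Every internal (non-leaf) node of the tree has at least `e` children. -/
inductive GTree.Branching (e : ℕ) : GTree → Prop
  | leaf : Branching e (.node [])
  | node {cs : List GTree} (hne : cs ≠ []) (hlen : e ≤ cs.length)
      (hc : ∀ c ∈ cs, Branching e c) : Branching e (.node cs)

/-- Every leaf of the tree has depth at most `h`. -/
inductive GTree.DepthLe : ℕ → GTree → Prop
  | leaf (h : ℕ) : DepthLe h (.node [])
  | node {h : ℕ} {cs : List GTree} (hc : ∀ c ∈ cs, DepthLe h c) :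
      DepthLe (h + 1) (.node cs)

/-- If every tree of a forest has weight at least `1`, then the forest has weight at least its
number of trees. -/
theorem GTree.length_le_forest (x : ℝ) (n : ℕ) (cs : List GTree)
    (hc : ∀ c ∈ cs, (1 : ℝ) ≤ ∑ j ∈ Finset.range n, (c.leafCount j : ℝ) * x ^ j) :
    (cs.length : ℝ) ≤
      ∑ j ∈ Finset.range n, (((cs.map fun c => c.leafCount j).sum : ℕ) : ℝ) * x ^ j := by
  induction cs with
  | nil => simp
  | cons c cs ih =>
    have h1 := hc c (by simp)
    have h2 := ih fun d hd => hc d (by simp [hd])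
    simp only [List.map_cons, List.sum_cons, List.length_cons, Nat.cast_add, Nat.cast_one,
      add_mul, Finset.sum_add_distrib]
    linarith

/-- Reverse Kraft inequality: a tree whose internal nodes have at least `e` children has total leaf
weight at least `1`, a leaf at depth `j` weighing `e⁻ʲ`. -/
theorem GTree.one_le_kraft {e h : ℕ} (he : 0 < e) {T : GTree}
    (hb : GTree.Branching e T) (hd : GTree.DepthLe h T) :
    (1 : ℝ) ≤ ∑ j ∈ Finset.range (h + 1), (T.leafCount j : ℝ) * ((e : ℝ)⁻¹) ^ j := by
  have he' : (0 : ℝ) < e := by exact_mod_cast he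
  induction hd with
  | leaf h =>
    rw [Finset.sum_range_succ']
    simp [GTree.leafCount]
  | @node h cs _ ih =>
    cases hb with
    | leaf =>
      rw [Finset.sum_range_succ']
      simp [GTree.leafCount]
    | node hne hlen hbc =>
      have key := GTree.length_le_forest (e : ℝ)⁻¹ (h + 1) cs fun c hc => ih c hc (hbc c hc)
      have hlen' : (e : ℝ) ≤ cs.length := by exact_mod_cast hlen
      rw [Finset.sum_range_succ']
      simp only [GTree.leafCount, pow_succ, ← mul_assoc, ← Finset.sum_mul]
      have h0 : (1 : ℝ) ≤ (∑ j ∈ Finset.range (h + 1),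
          (((cs.map fun c => c.leafCount j).sum : ℕ) : ℝ) * (e : ℝ)⁻¹ ^ j) * (e : ℝ)⁻¹ := by
        rw [← div_eq_mul_inv, one_le_div he']
        exact hlen'.trans key
      simpa [hne] using h0

/-- In a finite rooted tree in which every internal node has at
least `e ≥ 2` children and every leaf has depth at most `h`, there is a depth
`0 ≤ j ≤ h` containing at least `(e/2)^j` leaves. -/
theorem stmt_15 (e h : ℕ) (he : 2 ≤ e) (T : GTree)
    (hb : GTree.Branching e T) (hd : GTree.DepthLe h T) :
    ∃ j : ℕ, j ≤ h ∧ ((e : ℝ) / 2) ^ j ≤ (T.leafCount j : ℝ) := by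
  have he' : (0 : ℝ) < e := by exact_mod_cast (by omega : 0 < e)
  by_contra! hlt
  have hkraft := GTree.one_le_kraft (by omega : 0 < e) hb hd
  have hzero : T.leafCount 0 = 0 := by
    have := hlt 0 (Nat.zero_le h)
    rw [pow_zero] at this
    exact Nat.lt_one_iff.mp (by exact_mod_cast this)
  rw [Finset.sum_range_succ', hzero] at hkraft
  have hle : ∑ j ∈ Finset.range h, (T.leafCount (j + 1) : ℝ) * ((e : ℝ)⁻¹) ^ (j + 1)
      ≤ ∑ j ∈ Finset.range h, (1 / 2 : ℝ) ^ (j + 1) := by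
    refine Finset.sum_le_sum fun j hj => ?_
    have h1 := (hlt (j + 1) (Finset.mem_range.mp hj)).le
    calc (T.leafCount (j + 1) : ℝ) * ((e : ℝ)⁻¹) ^ (j + 1)
        ≤ ((e : ℝ) / 2) ^ (j + 1) * ((e : ℝ)⁻¹) ^ (j + 1) := by gcongr
      _ = (1 / 2 : ℝ) ^ (j + 1) := by
        rw [← mul_pow]
        congr 1
        field_simp
  have hgeom : ∀ n : ℕ, ∑ j ∈ Finset.range n, (1 / 2 : ℝ) ^ (j + 1) = 1 - (1 / 2) ^ n := by
    intro n
    induction n with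
    | zero => simp
    | succ n ih => rw [Finset.sum_range_succ, ih]; ring
  have hpos : (0 : ℝ) < (1 / 2) ^ h := by positivity
  rw [hgeom] at hle
  simp only [Nat.cast_zero, zero_mul, add_zero] at hkraft
  linarith
end
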